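/- One has q_t^N(0) → 1 as N → ∞, uniformly in t ∈ [0,1]; explicitly, Q_P^N(0) = 2π·∫_0^1 (1−x)^N dx = 2π/(N+1), Q_t^N(0) = 2π·∫_0^1 e^{−N·(x·G_t'(x) − G_t(x) + f_t(0))} dx, and sup_{t∈[0,1]} |Q_t^N(0)/Q_P^N(0) − 1| → 0 as N → ∞. -/

import Mathlib

open Set Filter

noncomputable def GP : ℝ → ℝ := fun x => x * Real.log x + (1 - x) * Real.log (1 - x)

noncomputable def Gt (f0 f1 : ℝ → ℝ) (t : ℝ) : ℝ → ℝ :=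
  fun x => GP x + ((1 - t) * f0 x + t * f1 x)

noncomputable def Phase (G : ℝ → ℝ) (α : ℝ) : ℝ → ℝ :=
  fun x => (x - α) * deriv G x - (G x - G α)

noncomputable def Qnorm (G : ℝ → ℝ) (N : ℕ) (α : ℝ) : ℝ :=
  2 * Real.pi * ∫ x in (0:ℝ)..1, Real.exp (-(N : ℝ) * Phase G α x)

noncomputable def RPhase (G : ℝ → ℝ) (α : ℝ) : ℝ → ℝ :=
  fun y => (1 / α) * Phase G α (α * (1 + y))

noncomputable def Leg (G : ℝ → ℝ) (S : Set ℝ) : ℝ → ℝ :=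
  fun ρ => sSup ((fun x => x * ρ - G x) '' S)

noncomputable def QQ (G : ℝ → ℝ) (N : ℕ) (α : ℝ) : ℝ :=
  Qnorm G N α * Real.exp ((N : ℝ) * G α)

/-!
The phase `Phase (Gt f0 f1 t) 0` is an affine function of `t`, so only the endpoints `t = 0, 1`
matter. There convexity makes the phase monotone, and it behaves like `x` as `x → 0⁺`: a `C¹`
perturbation `f` of `GP` changes the phase `-log (1 - x)` of `GP` by
`x f'(x) - (f x - f 0) = o(x)`. Monotonicity propagates the behaviour at `0` to a bound
`c x ≤ Phase (Gt f0 f1 t) 0 x` with `c > 0` on the whole interval, and after the substitution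
`u = N x` the integrand is dominated by `exp (-c u)` and tends to `exp (-u)`. Uniformity in `t`
comes for free by applying dominated convergence along the filter `atTop ×ˢ 𝓟 [0, 1]` of pairs
`(N, t)`. Hence `N Q_t^N(0) → 2π` uniformly, just as `N Q_P^N(0) → 2π`.
-/

open MeasureTheory Asymptotics
open scoped Topology

section Laplace

variable {ι : Type*} {l : Filter ι}

lemma aestronglyMeasurable_comp_div {g : ℝ → ℝ} (hg : AEStronglyMeasurable g) {r : ℝ}
    (hr : r ≠ 0) : AEStronglyMeasurable fun u => g (u / r) := by
  refine hg.comp_quasiMeasurePreserving ⟨by fun_prop, ?_⟩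
  simp only [div_eq_mul_inv, Real.map_volume_mul_right (inv_ne_zero hr)]
  exact Measure.smul_absolutelyContinuous

/-- `r ∫_0^b exp (-r φ x) dx` is `∫_ℝ rescaledExpNeg φ b r u du`, by the substitution `u = r x`;
the integrand is extended by `0` so that the domain of integration does not depend on `r`. -/
noncomputable def rescaledExpNeg (φ : ℝ → ℝ) (b r u : ℝ) : ℝ :=
  (Ioo 0 b).indicator (fun x => Real.exp (-(r * φ x))) (u / r)

lemma integral_rescaledExpNeg {φ : ℝ → ℝ} {b r : ℝ} (hb : 0 ≤ b) (hr : 0 ≤ r) :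
    ∫ u, rescaledExpNeg φ b r u = r * ∫ x in (0 : ℝ)..b, Real.exp (-(r * φ x)) := by
  unfold rescaledExpNeg
  rw [Measure.integral_comp_div, integral_indicator measurableSet_Ioo, abs_of_nonneg hr,
    intervalIntegral.integral_of_le hb, integral_Ioc_eq_integral_Ioo, smul_eq_mul]

lemma aestronglyMeasurable_rescaledExpNeg {φ : ℝ → ℝ} {b r : ℝ} (hr : r ≠ 0)
    (hφ : AEMeasurable φ (volume.restrict (Ioo 0 b))) :
    AEStronglyMeasurable (rescaledExpNeg φ b r) :=
  aestronglyMeasurable_comp_div (((aestronglyMeasurable_indicator_iff measurableSet_Ioo).2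
    (hφ.const_mul r).neg.exp.aestronglyMeasurable)) hr

lemma norm_rescaledExpNeg_le {φ : ℝ → ℝ} {b c r : ℝ} (hr : 0 < r)
    (hlow : ∀ x ∈ Ioo 0 b, c * x ≤ φ x) (u : ℝ) :
    ‖rescaledExpNeg φ b r u‖ ≤ (Ioi 0).indicator (fun u => Real.exp (-c * u)) u := by
  unfold rescaledExpNeg
  by_cases hu : u / r ∈ Ioo 0 b
  · have hu0 : u ∈ Ioi 0 := (div_pos_iff_of_pos_right hr).1 hu.1
    rw [indicator_of_mem hu, indicator_of_mem hu0, Real.norm_of_nonneg (Real.exp_nonneg _),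
      Real.exp_le_exp]
    calc -(r * φ (u / r)) ≤ -(r * (c * (u / r))) := by gcongr; exact hlow _ hu
      _ = -c * u := by field_simp
  · rw [indicator_of_notMem hu, norm_zero]
    exact indicator_nonneg (fun _ _ => Real.exp_nonneg _) u

lemma rescaledExpNeg_of_nonpos (φ : ℝ → ℝ) (b : ℝ) {r u : ℝ} (hr : 0 ≤ r) (hu : u ≤ 0) :
    rescaledExpNeg φ b r u = 0 :=
  indicator_of_notMem (fun h => h.1.not_ge (div_nonpos_of_nonpos_of_nonneg hu hr)) _

lemma tendsto_rescaledExpNeg {φ : ι → ℝ → ℝ} {r : ι → ℝ} {b u v : ℝ} (hr : Tendsto r l atTop)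
    (hb : 0 < b) (hu : 0 < u) (hlim : Tendsto (fun i => r i * φ i (u / r i)) l (𝓝 v)) :
    Tendsto (fun i => rescaledExpNeg (φ i) b (r i) u) l (𝓝 (Real.exp (-v))) := by
  refine hlim.neg.rexp.congr' ?_
  filter_upwards [hr.eventually_gt_atTop 0, (hr.const_div_atTop u).eventually_lt_const hb]
    with i hri hub
  have hmem : u / r i ∈ Ioo 0 b := ⟨div_pos hu hri, hub⟩
  rw [rescaledExpNeg, indicator_of_mem hmem]

theorem tendsto_mul_integral_exp_neg_mul [l.IsCountablyGenerated] {φ : ι → ℝ → ℝ} {r : ι → ℝ}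
    {ψ : ℝ → ℝ} {b c : ℝ} (hr : Tendsto r l atTop) (hb : 0 < b) (hc : 0 < c)
    (hmeas : ∀ᶠ i in l, AEMeasurable (φ i) (volume.restrict (Ioo 0 b)))
    (hlow : ∀ᶠ i in l, ∀ x ∈ Ioo 0 b, c * x ≤ φ i x)
    (hlim : ∀ u, 0 < u → Tendsto (fun i => r i * φ i (u / r i)) l (𝓝 (ψ u))) :
    Tendsto (fun i => r i * ∫ x in (0 : ℝ)..b, Real.exp (-(r i * φ i x))) l
      (𝓝 (∫ u in Ioi 0, Real.exp (-ψ u))) := by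
  have hr0 : ∀ᶠ i in l, 0 < r i := hr.eventually_gt_atTop 0
  have hbound : Integrable ((Ioi 0).indicator fun u => Real.exp (-c * u)) :=
    (exp_neg_integrableOn_Ioi 0 hc).integrable_indicator measurableSet_Ioi
  rw [← integral_indicator measurableSet_Ioi]
  refine (tendsto_integral_filter_of_dominated_convergence
    (F := fun i => rescaledExpNeg (φ i) b (r i)) _ ?_ ?_ hbound ?_).congr' ?_
  · filter_upwards [hr0, hmeas] with i hri hi
    exact aestronglyMeasurable_rescaledExpNeg hri.ne' hi
  · filter_upwards [hr0, hlow] with i hri hi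
    exact .of_forall (norm_rescaledExpNeg_le hri hi)
  · refine .of_forall fun u => ?_
    rcases le_or_gt u 0 with hu | hu
    · rw [indicator_of_notMem (notMem_Ioi.2 hu)]
      refine tendsto_const_nhds.congr' ?_
      filter_upwards [hr0] with i hri
      exact (rescaledExpNeg_of_nonpos (φ i) b hri.le hu).symm
    · rw [indicator_of_mem (mem_Ioi.2 hu)]
      exact tendsto_rescaledExpNeg hr hb hu (hlim u hu)
  · filter_upwards [hr0] with i hri
    exact integral_rescaledExpNeg hb.le hri.le

end Laplace

lemma exists_mul_le_of_monotoneOn_of_isEquivalent_id {φ : ℝ → ℝ} {b : ℝ} (hb : 0 < b)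
    (hmono : MonotoneOn φ (Ioo 0 b)) (hφ : φ ~[𝓝[>] 0] id) :
    ∃ c, 0 < c ∧ ∀ x ∈ Ioo 0 b, c * x ≤ φ x := by
  have hhalf : ∀ᶠ x in 𝓝[>] (0 : ℝ), x / 2 ≤ φ x := by
    filter_upwards [hφ.isLittleO.bound (by norm_num : (0 : ℝ) < 1 / 2), self_mem_nhdsWithin]
      with x hx (hx0 : 0 < x)
    simp only [Pi.sub_apply, id, Real.norm_eq_abs, abs_of_pos hx0] at hx
    linarith [(abs_le.1 hx).1]
  obtain ⟨δ, (hδ0 : 0 < δ), hnear⟩ :=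
    mem_nhdsGT_iff_exists_Ioc_subset.1 (hhalf.and (Ioo_mem_nhdsGT hb))
  have hδmem := hnear ⟨hδ0, le_rfl⟩
  refine ⟨min (1 / 2) (δ / 2 / b), by positivity, fun x hx => ?_⟩
  rcases le_total x δ with hxδ | hδx
  · calc min (1 / 2) (δ / 2 / b) * x ≤ 1 / 2 * x := by gcongr; exacts [hx.1.le, min_le_left _ _]
      _ = x / 2 := by ring
      _ ≤ φ x := (hnear ⟨hx.1, hxδ⟩).1
  · calc min (1 / 2) (δ / 2 / b) * x ≤ δ / 2 / b * b := by
          gcongr; exacts [hx.1.le, min_le_right _ _, hx.2.le]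
      _ = δ / 2 := div_mul_cancel₀ _ hb.ne'
      _ ≤ φ δ := hδmem.1
      _ ≤ φ x := hmono hδmem.2 hx hδx

lemma tendsto_mul_comp_div_atTop {φ : ℝ → ℝ} (hφ : φ ~[𝓝[>] 0] id) {u : ℝ} (hu : 0 < u) :
    Tendsto (fun r => r * φ (u / r)) atTop (𝓝 u) := by
  have hdiv : Tendsto (fun r => u / r) atTop (𝓝[>] 0) :=
    tendsto_nhdsWithin_iff.2 ⟨tendsto_const_nhds.div_atTop tendsto_id,
      (eventually_gt_atTop 0).mono fun r hr => div_pos hu hr⟩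
  have hequiv : (fun r => r * φ (u / r)) ~[atTop] fun r => r * (u / r) :=
    IsEquivalent.refl.mul (hφ.comp_tendsto hdiv)
  refine hequiv.symm.tendsto_nhds (tendsto_const_nhds.congr' ?_)
  filter_upwards [eventually_ne_atTop 0] with r hr
  exact (mul_div_cancel₀ u hr).symm

lemma tendsto_convexCombination {α E : Type*} [SeminormedAddCommGroup E]
    [NormedSpace ℝ E] {l : Filter α} {a b : α → E} {u : E}
    (ha : Tendsto a l (𝓝 u)) (hb : Tendsto b l (𝓝 u)) :
    Tendsto (fun p : α × ℝ => (1 - p.2) • a p.1 + p.2 • b p.1) (l ×ˢ 𝓟 (Icc 0 1)) (𝓝 u) := by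
  refine Metric.nhds_basis_ball.tendsto_right_iff.2 fun ε hε => eventually_prod_principal_iff.2 ?_
  filter_upwards [ha (Metric.ball_mem_nhds u hε), hb (Metric.ball_mem_nhds u hε)]
    with i hai hbi t ht
  exact convex_ball u ε hai hbi (sub_nonneg.2 ht.2) ht.1 (sub_add_cancel 1 t)

theorem tendsto_mul_integral_exp_neg_convexCombination {φ₀ φ₁ : ℝ → ℝ} {b : ℝ} (hb : 0 < b)
    (hmono₀ : MonotoneOn φ₀ (Ioo 0 b)) (hmono₁ : MonotoneOn φ₁ (Ioo 0 b))
    (hφ₀ : φ₀ ~[𝓝[>] 0] id) (hφ₁ : φ₁ ~[𝓝[>] 0] id) :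
    Tendsto (fun p : ℝ × ℝ => p.1 * ∫ x in (0 : ℝ)..b,
        Real.exp (-(p.1 * ((1 - p.2) * φ₀ x + p.2 * φ₁ x))))
      (atTop ×ˢ 𝓟 (Icc 0 1)) (𝓝 1) := by
  obtain ⟨c₀, hc₀, hlow₀⟩ := exists_mul_le_of_monotoneOn_of_isEquivalent_id hb hmono₀ hφ₀
  obtain ⟨c₁, hc₁, hlow₁⟩ := exists_mul_le_of_monotoneOn_of_isEquivalent_id hb hmono₁ hφ₁
  suffices hlap : Tendsto _ _ (𝓝 (∫ u in Ioi (0 : ℝ), Real.exp (-u))) by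
    rwa [integral_exp_neg_Ioi_zero] at hlap
  refine tendsto_mul_integral_exp_neg_mul tendsto_fst hb (lt_min hc₀ hc₁)
    (.of_forall fun p => ?_) (eventually_prod_principal_iff.2 <| .of_forall fun _ t ht x hx => ?_)
    fun u hu => ?_
  · exact ((aemeasurable_restrict_of_monotoneOn measurableSet_Ioo hmono₀).const_mul _).add
      ((aemeasurable_restrict_of_monotoneOn measurableSet_Ioo hmono₁).const_mul _)
  · have hmin₀ : min c₀ c₁ * x ≤ φ₀ x :=
      (mul_le_mul_of_nonneg_right (min_le_left _ _) hx.1.le).trans (hlow₀ x hx)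
    have hmin₁ : min c₀ c₁ * x ≤ φ₁ x :=
      (mul_le_mul_of_nonneg_right (min_le_right _ _) hx.1.le).trans (hlow₁ x hx)
    exact convex_Ici (min c₀ c₁ * x) hmin₀ hmin₁ (sub_nonneg.2 ht.2) ht.1 (sub_add_cancel 1 t)
  · refine (tendsto_convexCombination (tendsto_mul_comp_div_atTop hφ₀ hu)
      (tendsto_mul_comp_div_atTop hφ₁ hu)).congr fun p => ?_
    simp only [smul_eq_mul]
    ring

lemma isLittleO_Phase {f : ℝ → ℝ} {α : ℝ} (hf : DifferentiableAt ℝ f α)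
    (hf' : ContinuousAt (deriv f) α) : Phase f α =o[𝓝 α] fun x => x - α := by
  have hslope : (fun x => f x - f α - (x - α) * deriv f α) =o[𝓝 α] fun x => x - α :=
    hasDerivAt_iff_isLittleO.1 hf.hasDerivAt
  have hderiv : (fun x => (x - α) * (deriv f x - deriv f α)) =o[𝓝 α] fun x => x - α := by
    simpa using (isBigO_refl (fun x => x - α) (𝓝 α)).mul_isLittleO
      ((isLittleO_one_iff ℝ).2 (tendsto_sub_nhds_zero_iff.2 hf'))
  refine (hderiv.sub hslope).congr_left fun x => ?_
  simp only [Phase]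
  ring

lemma Phase_add {F G : ℝ → ℝ} {α x : ℝ} (hF : DifferentiableAt ℝ F x)
    (hG : DifferentiableAt ℝ G x) : Phase (F + G) α x = Phase F α x + Phase G α x := by
  simp only [Phase, deriv_add hF hG, Pi.add_apply]
  ring

lemma Phase_const_smul (a : ℝ) (G : ℝ → ℝ) (α x : ℝ) : Phase (a • G) α x = a * Phase G α x := by
  simp only [Phase, deriv_const_smul_field, Pi.smul_apply, smul_eq_mul]
  ring

/-- `Phase G α x` is the height at `α` of the graph of `G` above its tangent line at `x`, which
grows as `x` moves away from `α`. -/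
lemma monotoneOn_Phase {G : ℝ → ℝ} {s : Set ℝ} (hG : ConvexOn ℝ s G)
    (hdiff : ∀ x ∈ s, DifferentiableAt ℝ G x) (α : ℝ) :
    MonotoneOn (Phase G α) (s ∩ Ici α) := by
  intro x hx y hy hxy
  rcases hxy.eq_or_lt with rfl | hlt
  · rfl
  have htangent : G y - G x ≤ deriv G y * (y - x) :=
    (div_le_iff₀ (sub_pos.2 hlt)).1 <| by
      simpa only [slope_def_field] using hG.slope_le_deriv hx.1 hy.1 hlt (hdiff y hy.1)
  have hderiv : (x - α) * deriv G x ≤ (x - α) * deriv G y :=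
    mul_le_mul_of_nonneg_left (hG.monotoneOn_deriv hdiff hx.1 hy.1 hxy) (sub_nonneg.2 hx.2)
  simp only [Phase]
  linarith

lemma convexOn_of_iteratedDeriv_two_pos {G : ℝ → ℝ} {s : Set ℝ} (hs : Convex ℝ s)
    (hG : ContinuousOn G s) (hG'' : ∀ x ∈ s, 0 < iteratedDeriv 2 G x) : ConvexOn ℝ s G := by
  simp only [iteratedDeriv_eq_iterate] at hG''
  exact (strictConvexOn_of_deriv2_pos' hs hG hG'').convexOn

lemma GP_eq_neg_binEntropy : GP = -Real.binEntropy := by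
  ext x
  simp only [GP, Pi.neg_apply, Real.binEntropy, Real.log_inv, mul_neg]
  ring

lemma continuous_GP : Continuous GP :=
  GP_eq_neg_binEntropy ▸ Real.binEntropy_continuous.neg

lemma hasDerivAt_GP {x : ℝ} (hx₀ : x ≠ 0) (hx₁ : x ≠ 1) :
    HasDerivAt GP (Real.log x - Real.log (1 - x)) x := by
  simpa [GP_eq_neg_binEntropy] using (Real.hasDerivAt_binEntropy hx₀ hx₁).neg

lemma differentiableAt_GP {x : ℝ} (hx : x ∈ Ioo 0 1) : DifferentiableAt ℝ GP x :=
  (hasDerivAt_GP hx.1.ne' hx.2.ne).differentiableAt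

lemma Phase_GP_zero {x : ℝ} (hx : x ∈ Ioo 0 1) : Phase GP 0 x = -Real.log (1 - x) := by
  simp only [Phase, (hasDerivAt_GP hx.1.ne' hx.2.ne).deriv, GP, sub_zero, Real.log_zero,
    Real.log_one, mul_zero, add_zero]
  ring

lemma isEquivalent_Phase_GP_zero : Phase GP 0 ~[𝓝[>] 0] id := by
  have hlog : HasDerivAt (fun x : ℝ => -Real.log (1 - x)) 1 0 := by
    simpa using! (((hasDerivAt_id (0 : ℝ)).const_sub 1).log (by simp)).neg
  have hequiv : (fun x : ℝ => -Real.log (1 - x)) ~[𝓝 0] id := by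
    simpa [IsEquivalent, Pi.sub_def, Function.id_def] using hasDerivAt_iff_isLittleO.1 hlog
  refine (hequiv.mono nhdsWithin_le_nhds).congr_left ?_
  filter_upwards [Ioo_mem_nhdsGT one_pos] with x hx using (Phase_GP_zero hx).symm

lemma isEquivalent_Phase_GP_add_zero {f : ℝ → ℝ} (hf : ContDiff ℝ 1 f) :
    Phase (GP + f) 0 ~[𝓝[>] 0] id := by
  have hfd : Differentiable ℝ f := hf.differentiable one_ne_zero
  have hsmall : Phase f 0 =o[𝓝[>] 0] (id : ℝ → ℝ) := by
    simpa [Function.id_def] using (isLittleO_Phase (hfd 0)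
      (hf.continuous_deriv_one).continuousAt).mono nhdsWithin_le_nhds
  refine (isEquivalent_Phase_GP_zero.add_isLittleO hsmall).congr_left ?_
  filter_upwards [Ioo_mem_nhdsGT one_pos] with x hx
  exact (Phase_add (differentiableAt_GP hx) (hfd x)).symm

lemma Qnorm_GP_zero_eq_integral (N : ℕ) :
    Qnorm GP N 0 = 2 * Real.pi * ∫ x in (0 : ℝ)..1, (1 - x) ^ N := by
  unfold Qnorm
  congr 1
  refine intervalIntegral.integral_congr_Ioo_of_le zero_le_one fun x hx => ?_
  simp only [Phase_GP_zero hx, neg_mul_neg, Real.exp_nat_mul, Real.exp_log (sub_pos.2 hx.2)]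

lemma Qnorm_GP_zero (N : ℕ) : Qnorm GP N 0 = 2 * Real.pi / (N + 1) := by
  rw [Qnorm_GP_zero_eq_integral,
    intervalIntegral.integral_comp_sub_left (fun x : ℝ => x ^ N) 1]
  simp [integral_pow, div_eq_mul_inv]

lemma tendsto_natCast_mul_Qnorm_GP_zero :
    Tendsto (fun N : ℕ => (N : ℝ) * Qnorm GP N 0) atTop (𝓝 (2 * Real.pi)) := by
  convert (tendsto_natCast_div_add_atTop (1 : ℝ)).const_mul (2 * Real.pi) using 2 with N
  · rw [Qnorm_GP_zero]
    ring
  · ring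

section Potentials

variable (f0 f1 : ℝ → ℝ)

lemma Gt_zero : Gt f0 f1 0 = GP + f0 := by ext; simp [Gt]

lemma Gt_one : Gt f0 f1 1 = GP + f1 := by ext; simp [Gt]

lemma Gt_eq_convexCombination (t : ℝ) :
    Gt f0 f1 t = (1 - t) • Gt f0 f1 0 + t • Gt f0 f1 1 := by
  ext
  simp only [Gt, Pi.add_apply, Pi.smul_apply, smul_eq_mul]
  ring

lemma Gt_apply_zero (t : ℝ) : Gt f0 f1 t 0 = (1 - t) * f0 0 + t * f1 0 := by
  simp [Gt, GP]

lemma Qnorm_Gt_zero (t : ℝ) (N : ℕ) :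
    Qnorm (Gt f0 f1 t) N 0 = 2 * Real.pi * ∫ x in (0 : ℝ)..1,
      Real.exp (-(N : ℝ) * (x * deriv (Gt f0 f1 t) x - Gt f0 f1 t x +
        ((1 - t) * f0 0 + t * f1 0))) := by
  simp only [Qnorm, Phase, Gt_apply_zero, sub_zero, sub_sub_eq_add_sub, sub_add_eq_add_sub]

variable {f0 f1}

lemma continuous_Gt (hf0 : Continuous f0) (hf1 : Continuous f1) (t : ℝ) :
    Continuous (Gt f0 f1 t) :=
  continuous_GP.add ((hf0.const_mul _).add (hf1.const_mul _))

lemma convexOn_Gt (hf0 : Continuous f0) (hf1 : Continuous f1) {t : ℝ}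
    (hG : ∀ x ∈ Ioo 0 1, 0 < iteratedDeriv 2 (Gt f0 f1 t) x) :
    ConvexOn ℝ (Ioo 0 1) (Gt f0 f1 t) :=
  convexOn_of_iteratedDeriv_two_pos (convex_Ioo 0 1) (continuous_Gt hf0 hf1 t).continuousOn hG

lemma differentiableAt_Gt {x : ℝ} (hf0 : DifferentiableAt ℝ f0 x) (hf1 : DifferentiableAt ℝ f1 x)
    (t : ℝ) (hx : x ∈ Ioo 0 1) : DifferentiableAt ℝ (Gt f0 f1 t) x :=
  (differentiableAt_GP hx).add ((hf0.const_mul _).add (hf1.const_mul _))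

lemma Phase_Gt {x : ℝ} (hf0 : DifferentiableAt ℝ f0 x) (hf1 : DifferentiableAt ℝ f1 x)
    (t α : ℝ) (hx : x ∈ Ioo 0 1) :
    Phase (Gt f0 f1 t) α x =
      (1 - t) * Phase (Gt f0 f1 0) α x + t * Phase (Gt f0 f1 1) α x := by
  rw [Gt_eq_convexCombination, Phase_add ((differentiableAt_Gt hf0 hf1 0 hx).const_smul _)
    ((differentiableAt_Gt hf0 hf1 1 hx).const_smul _), Phase_const_smul, Phase_const_smul]

lemma monotoneOn_Phase_Gt {t : ℝ} (hf0 : Differentiable ℝ f0) (hf1 : Differentiable ℝ f1)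
    (hG : ConvexOn ℝ (Ioo 0 1) (Gt f0 f1 t)) :
    MonotoneOn (Phase (Gt f0 f1 t) 0) (Ioo 0 1) :=
  (monotoneOn_Phase hG (fun x hx => differentiableAt_Gt (hf0 x) (hf1 x) t hx) 0).mono
    fun _ hx => ⟨hx, hx.1.le⟩

lemma tendsto_natCast_mul_Qnorm_Gt_zero (hf0 : ContDiff ℝ 1 f0) (hf1 : ContDiff ℝ 1 f1)
    (hG0 : ConvexOn ℝ (Ioo 0 1) (Gt f0 f1 0)) (hG1 : ConvexOn ℝ (Ioo 0 1) (Gt f0 f1 1)) :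
    Tendsto (fun p : ℕ × ℝ => (p.1 : ℝ) * Qnorm (Gt f0 f1 p.2) p.1 0)
      (atTop ×ˢ 𝓟 (Icc 0 1)) (𝓝 (2 * Real.pi)) := by
  have hd0 : Differentiable ℝ f0 := hf0.differentiable one_ne_zero
  have hd1 : Differentiable ℝ f1 := hf1.differentiable one_ne_zero
  have hlaplace := tendsto_mul_integral_exp_neg_convexCombination one_pos
    (monotoneOn_Phase_Gt hd0 hd1 hG0) (monotoneOn_Phase_Gt hd0 hd1 hG1)
    (Gt_zero f0 f1 ▸ isEquivalent_Phase_GP_add_zero hf0)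
    (Gt_one f0 f1 ▸ isEquivalent_Phase_GP_add_zero hf1)
  have hnat := (hlaplace.comp
    ((tendsto_natCast_atTop_atTop (R := ℝ)).prodMap tendsto_id)).const_mul (2 * Real.pi)
  rw [mul_one] at hnat
  refine hnat.congr fun p => ?_
  have hintegral : Qnorm (Gt f0 f1 p.2) p.1 0 = 2 * Real.pi * ∫ x in (0 : ℝ)..1,
      Real.exp (-(p.1 * ((1 - p.2) * Phase (Gt f0 f1 0) 0 x + p.2 * Phase (Gt f0 f1 1) 0 x))) := by
    unfold Qnorm
    congr 1
    refine intervalIntegral.integral_congr_Ioo_of_le zero_le_one fun x hx => ?_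
    simp only [neg_mul]
    rw [Phase_Gt (hd0 x) (hd1 x) _ _ hx]
  rw [hintegral, mul_left_comm]
  rfl

lemma tendstoUniformlyOn_Qnorm_Gt_div_Qnorm_GP_zero (hf0 : ContDiff ℝ 1 f0) (hf1 : ContDiff ℝ 1 f1)
    (hG0 : ConvexOn ℝ (Ioo 0 1) (Gt f0 f1 0)) (hG1 : ConvexOn ℝ (Ioo 0 1) (Gt f0 f1 1)) :
    TendstoUniformlyOn (fun N t => Qnorm (Gt f0 f1 t) N 0 / Qnorm GP N 0) (fun _ => 1) atTop
      (Icc 0 1) := by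
  rw [← tendsto_prod_principal_iff]
  have hratio := (tendsto_natCast_mul_Qnorm_Gt_zero hf0 hf1 hG0 hG1).div
    (tendsto_natCast_mul_Qnorm_GP_zero.comp tendsto_fst) Real.two_pi_pos.ne'
  rw [div_self Real.two_pi_pos.ne'] at hratio
  refine hratio.congr' ?_
  filter_upwards [tendsto_fst.eventually (eventually_ne_atTop 0)] with p hp
  exact mul_div_mul_left _ _ (Nat.cast_ne_zero.2 hp)

end Potentials

theorem bergman_cp1_q_at_zero_tends_to_one_general
    (f0 f1 : ℝ → ℝ) (hf0 : ContDiff ℝ 1 f0) (hf1 : ContDiff ℝ 1 f1)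
    (hG0 : ConvexOn ℝ (Ioo 0 1) (Gt f0 f1 0))
    (hG1 : ConvexOn ℝ (Ioo 0 1) (Gt f0 f1 1)) :
    (∀ N : ℕ, Qnorm GP N 0 = 2 * Real.pi * ∫ x in (0:ℝ)..1, (1 - x) ^ N) ∧
    (∀ N : ℕ, Qnorm GP N 0 = 2 * Real.pi / ((N : ℝ) + 1)) ∧
    (∀ N : ℕ, ∀ t ∈ Set.Icc (0:ℝ) 1,
      Qnorm (Gt f0 f1 t) N 0 = 2 * Real.pi * ∫ x in (0:ℝ)..1,
        Real.exp (-(N:ℝ) * (x * deriv (Gt f0 f1 t) x - Gt f0 f1 t x +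
          ((1 - t) * f0 0 + t * f1 0)))) ∧
    (∀ ε : ℝ, 0 < ε → ∃ N₀ : ℕ, ∀ N : ℕ, N₀ ≤ N → ∀ t ∈ Set.Icc (0:ℝ) 1,
      |Qnorm (Gt f0 f1 t) N 0 / Qnorm GP N 0 - 1| < ε) := by
  refine ⟨Qnorm_GP_zero_eq_integral, Qnorm_GP_zero, fun N t _ => Qnorm_Gt_zero f0 f1 t N,
    fun ε hε => ?_⟩
  have hclose := Metric.tendstoUniformlyOn_iff.1
    (tendstoUniformlyOn_Qnorm_Gt_div_Qnorm_GP_zero hf0 hf1 hG0 hG1) ε hε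
  simpa only [dist_comm (1 : ℝ), Real.dist_eq] using eventually_atTop.1 hclose

theorem bergman_cp1_q_at_zero_tends_to_one
    (f0 f1 : ℝ → ℝ) (hf0 : ContDiff ℝ (⊤ : ℕ∞) f0) (hf1 : ContDiff ℝ (⊤ : ℕ∞) f1)
    (hG0 : ∀ x ∈ Set.Ioo (0:ℝ) 1, 0 < iteratedDeriv 2 (Gt f0 f1 0) x)
    (hG1 : ∀ x ∈ Set.Ioo (0:ℝ) 1, 0 < iteratedDeriv 2 (Gt f0 f1 1) x) :
    (∀ N : ℕ, Qnorm GP N 0 = 2 * Real.pi * ∫ x in (0:ℝ)..1, (1 - x) ^ N) ∧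
    (∀ N : ℕ, Qnorm GP N 0 = 2 * Real.pi / ((N : ℝ) + 1)) ∧
    (∀ N : ℕ, ∀ t ∈ Set.Icc (0:ℝ) 1,
      Qnorm (Gt f0 f1 t) N 0 = 2 * Real.pi * ∫ x in (0:ℝ)..1,
        Real.exp (-(N:ℝ) * (x * deriv (Gt f0 f1 t) x - Gt f0 f1 t x +
          ((1 - t) * f0 0 + t * f1 0)))) ∧
    (∀ ε : ℝ, 0 < ε → ∃ N₀ : ℕ, ∀ N : ℕ, N₀ ≤ N → ∀ t ∈ Set.Icc (0:ℝ) 1,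
      |Qnorm (Gt f0 f1 t) N 0 / Qnorm GP N 0 - 1| < ε) := by
  exact bergman_cp1_q_at_zero_tends_to_one_general f0 f1 (hf0.of_le (by simp)) (hf1.of_le (by simp))
    (convexOn_Gt hf0.continuous hf1.continuous hG0) (convexOn_Gt hf0.continuous hf1.continuous hG1)
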